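/- Let G be a graph of order n. Then G is s-path-coverable if and only if its (n−s)-closure C_{n−s}(G) is s-path-coverable. -/

import Mathlib

open Finset

/-- Spectral radius (largest eigenvalue) of the adjacency matrix of `G`. -/
noncomputable def specRad {V : Type*} [Fintype V] [DecidableEq V] (G : SimpleGraph V) : ℝ :=
  letI : DecidableRel G.Adj := Classical.decRel _
  sSup (spectrum ℝ (G.adjMatrix ℝ))

/-- Degree of a vertex, via `Set.ncard` (no decidability needed). -/
noncomputable def deg {V : Type*} (G : SimpleGraph V) (v : V) : ℕ :=
  (G.neighborSet v).ncard

/-- One step of the `k`-closure: add one edge between nonadjacent vertices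
with degree sum at least `k`. -/
def ClosureStep {V : Type*} (k : ℕ) (G H : SimpleGraph V) : Prop :=
  ∃ u v : V, u ≠ v ∧ ¬ G.Adj u v ∧ k ≤ deg G u + deg G v ∧
    H = G ⊔ SimpleGraph.fromEdgeSet {s(u, v)}

/-- No pair of nonadjacent vertices has degree sum at least `k`. -/
def IsKClosed {V : Type*} (k : ℕ) (H : SimpleGraph V) : Prop :=
  ∀ u v : V, u ≠ v → ¬ H.Adj u v → deg H u + deg H v < k

/-- `H` is a `k`-closure of `G`. -/
def IsKClosure {V : Type*} (k : ℕ) (G H : SimpleGraph V) : Prop :=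
  Relation.ReflTransGen (ClosureStep k) G H ∧ IsKClosed k H

/-- `G` is `s`-connected: more than `s` vertices, and deleting fewer than `s`
vertices leaves a connected graph. -/
def SConnected {V : Type*} [Fintype V] (s : ℕ) (G : SimpleGraph V) : Prop :=
  s < Fintype.card V ∧
    ∀ S : Finset V, S.card < s → (G.induce ((↑S : Set V)ᶜ)).Connected

/-- `G` is `s`-edge-connected: at least two vertices, and deleting fewer than
`s` edges leaves a connected graph. -/
def SEdgeConnected {V : Type*} [Fintype V] (s : ℕ) (G : SimpleGraph V) : Prop :=
  2 ≤ Fintype.card V ∧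
    ∀ F : Finset (Sym2 V), ↑F ⊆ G.edgeSet → F.card < s →
      (G.deleteEdges ↑F).Connected

/-- `G` is `β`-deficient: some matching leaves at most `β` vertices unmatched. -/
def BetaDeficient {V : Type*} [Fintype V] (β : ℕ) (G : SimpleGraph V) : Prop :=
  ∃ M : G.Subgraph, M.IsMatching ∧ Fintype.card V ≤ M.verts.ncard + β

/-- `G` is `s`-path-coverable: the vertices are covered by at most `s`
vertex-disjoint paths. -/
def SPathCoverable {V : Type*} (s : ℕ) (G : SimpleGraph V) : Prop :=
  ∃ m : ℕ, m ≤ s ∧ ∃ (a b : Fin m → V) (p : ∀ i, G.Walk (a i) (b i)),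
    (∀ i, (p i).IsPath) ∧
    (∀ i j, i ≠ j → ∀ x, x ∈ (p i).support → x ∉ (p j).support) ∧
    (∀ x : V, ∃ i, x ∈ (p i).support)

/-- `G` is `s`-Hamiltonian: deleting any at most `s` vertices leaves a
Hamiltonian graph. -/
def SHamiltonian {V : Type*} [Fintype V] [DecidableEq V] (s : ℕ) (G : SimpleGraph V) : Prop :=
  ∀ X : Finset V, X.card ≤ s → (G.induce ((↑X : Set V)ᶜ)).IsHamiltonian

/-- `G` is `s`-edge-Hamiltonian: any collection of vertex-disjoint paths with
at most `s` edges altogether is contained in a Hamiltonian cycle. -/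
def SEdgeHamiltonian {V : Type*} [Fintype V] [DecidableEq V] (s : ℕ) (G : SimpleGraph V) : Prop :=
  ∀ (m : ℕ) (a b : Fin m → V) (p : ∀ i, G.Walk (a i) (b i)),
    (∀ i, (p i).IsPath) →
    (∀ i j, i ≠ j → ∀ x, x ∈ (p i).support → x ∉ (p j).support) →
    (∑ i, (p i).length) ≤ s →
    ∃ (c : V) (w : G.Walk c c), w.IsHamiltonianCycle ∧
      ∀ i, ∀ e ∈ (p i).edges, e ∈ w.edges

/-- `G` is semi-regular bipartite: all edges go between `X` and its complement,
vertices in `X` all have degree `dX`, vertices outside `X` all have degree `dY`. -/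
def IsSemiregularBipartite {V : Type*} (G : SimpleGraph V) : Prop :=
  ∃ (X : Set V) (dX dY : ℕ),
    (∀ u v, G.Adj u v → (u ∈ X ↔ v ∉ X)) ∧
    (∀ u ∈ X, deg G u = dX) ∧
    (∀ u ∉ X, deg G u = dY)

/-- `G ∈ EP_n`: `G = Ḡ₁ ∨ G₂` with `G₁` an `r`-regular graph of order `n-k+r`
and `G₂` a spanning subgraph of `K_{k-r}` (equivalently: outside a set `S` of
`k-r` vertices the induced graph is `(n-k-1)`-regular, and all pairs between
`S` and its complement are joined). -/
def MemEP {V : Type*} [Fintype V] (n k : ℕ) (G : SimpleGraph V) : Prop :=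
  ∃ (r : ℕ) (S : Finset V), r ≤ k ∧ S.card = k - r ∧
    (∀ a ∉ S, ∀ b ∈ S, G.Adj a b) ∧
    (∀ a ∉ S, ((G.neighborSet a) \ (↑S : Set V)).ncard = n - k - 1)

/-- `G ∈ EC_n`: `G = Ḡ₁ ∨ G₂` where `G₁ = (X,Y)` is semi-regular bipartite of
order `n-s+1+r`, with degrees `k-s+2` on `X` and `n-k-1` on `Y`, and `G₂` is an
arbitrary graph on `s-1-r ≥ 0` vertices. -/
def MemEC {V : Type*} [Fintype V] [DecidableEq V] (n k s : ℕ) (G : SimpleGraph V) : Prop :=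
  ∃ (r : ℕ) (X Y S : Finset V) (G₁ : SimpleGraph V),
    Disjoint X Y ∧ Disjoint X S ∧ Disjoint Y S ∧ X ∪ Y ∪ S = Finset.univ ∧
    ((S.card : ℤ) = (s : ℤ) - 1 - r) ∧
    ((X.card : ℤ) + Y.card = (n : ℤ) - s + 1 + r) ∧
    (∀ u v, G₁.Adj u v → (u ∈ X ∧ v ∈ Y) ∨ (u ∈ Y ∧ v ∈ X)) ∧
    (∀ u ∈ X, ((deg G₁ u : ℤ) = (k : ℤ) - s + 2)) ∧
    (∀ v ∈ Y, ((deg G₁ v : ℤ) = (n : ℤ) - k - 1)) ∧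
    (∀ a, a ∈ X ∪ Y → ∀ b ∈ S, G.Adj a b) ∧
    (∀ a ∈ X ∪ Y, ∀ b ∈ X ∪ Y, (G.Adj a b ↔ a ≠ b ∧ ¬ G₁.Adj a b))

/-- `G ∈ ES_n`: `G = Ḡ₁ ∨ G₂` where `G₁ = (X,Y)` is semi-regular bipartite of
order `n-s-1+r`, with degrees `k-s` on `X` and `n-k-1` on `Y`, and `G₂` is an
arbitrary graph on `s+1-r ≥ 0` vertices. -/
def MemES {V : Type*} [Fintype V] [DecidableEq V] (n k s : ℕ) (G : SimpleGraph V) : Prop :=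
  ∃ (r : ℕ) (X Y S : Finset V) (G₁ : SimpleGraph V),
    Disjoint X Y ∧ Disjoint X S ∧ Disjoint Y S ∧ X ∪ Y ∪ S = Finset.univ ∧
    ((S.card : ℤ) = (s : ℤ) + 1 - r) ∧
    ((X.card : ℤ) + Y.card = (n : ℤ) - s - 1 + r) ∧
    (∀ u v, G₁.Adj u v → (u ∈ X ∧ v ∈ Y) ∨ (u ∈ Y ∧ v ∈ X)) ∧
    (∀ u ∈ X, ((deg G₁ u : ℤ) = (k : ℤ) - s)) ∧
    (∀ v ∈ Y, ((deg G₁ v : ℤ) = (n : ℤ) - k - 1)) ∧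
    (∀ a, a ∈ X ∪ Y → ∀ b ∈ S, G.Adj a b) ∧
    (∀ a ∈ X ∪ Y, ∀ b ∈ X ∪ Y, (G.Adj a b ↔ a ≠ b ∧ ¬ G₁.Adj a b))

/-- `G = K_{k+1} + K_{n-k-1}`: the disjoint union of a clique on `k+1` vertices
and a clique on the remaining vertices. -/
def IsCliquePlusClique {V : Type*} [Fintype V] (k : ℕ) (G : SimpleGraph V) : Prop :=
  ∃ S : Finset V, S.card = k + 1 ∧
    (∀ a ∈ S, ∀ b ∈ S, a ≠ b → G.Adj a b) ∧
    (∀ a ∉ S, ∀ b ∉ S, a ≠ b → G.Adj a b) ∧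
    (∀ a ∈ S, ∀ b ∉ S, ¬ G.Adj a b)

/-!
A nonempty graph is `s`-path-coverable iff its vertices can be listed with fewer than `s` breaks
(consecutive nonadjacent vertices), since cutting the list at its breaks leaves paths. Closing the
list up to a cycle and reopening it at a break shows that `s` breaks on the cycle are as good as
`s - 1` on the list.

Adding edges keeps a path cover. Conversely, suppose that a list has fewer than `s` breaks in
`G + uv`. It passes through `uv` at most once, so in `G` it has at most `s` breaks, and if it does
use `uv` it can be rotated to run from `v` to `u`. If some consecutive pair `a`, `b` satisfies two
of "`a`, `b` is a break", "`u` is adjacent to `a`" and "`v` is adjacent to `b`", then reversing the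
part from `v` to `a` replaces the cyclic links `ab` and `uv` by `ua` and `vb`, and this saves a
break on the cycle. Otherwise each of the `n - 1` consecutive pairs satisfies at most one of the
three, so the breaks number at most `n - 1 - deg u - deg v < s`.
-/

section Breaks

variable {α : Type*} (r : α → α → Prop) [DecidableRel r] {l l₁ l₂ : List α}

/-- The number of breaks of a list with respect to `r`: the consecutive entries not related by `r`.
For an enumeration of the vertices of a graph and its adjacency relation, this is one less than the
number of paths into which the enumeration falls apart. -/
def breakCount : List α → ℕ
  | [] => 0
  | [_] => 0
  | a :: b :: l => (if r a b then 0 else 1) + breakCount (b :: l)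

/-- The number of breaks of a list read cyclically, so that its last entry is followed by its
first one. A one-element list is compared with itself. -/
def cyclicBreakCount : List α → ℕ
  | [] => 0
  | a :: l => breakCount r (a :: l) + breakCount r [(a :: l).getLast (l.cons_ne_nil a), a]

@[simp]
lemma breakCount_singleton (a : α) : breakCount r [a] = 0 := rfl

lemma breakCount_pair (a b : α) : breakCount r [a, b] = if r a b then 0 else 1 := rfl

lemma breakCount_cons_cons (a b : α) (l : List α) :
    breakCount r (a :: b :: l) = breakCount r [a, b] + breakCount r (b :: l) := rfl

lemma breakCount_pair_le_one (a b : α) : breakCount r [a, b] ≤ 1 := by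
  rw [breakCount_pair]
  split_ifs <;> decide

lemma breakCount_append (h₁ : l₁ ≠ []) (h₂ : l₂ ≠ []) :
    breakCount r (l₁ ++ l₂) =
      breakCount r l₁ + breakCount r [l₁.getLast h₁, l₂.head h₂] + breakCount r l₂ := by
  induction l₁ with
  | nil => contradiction
  | cons a l₁ ih =>
    cases l₁ with
    | nil =>
      obtain ⟨b, l₂, rfl⟩ := List.exists_cons_of_ne_nil h₂
      rw [List.singleton_append, breakCount_cons_cons]
      simp
    | cons b l₁ =>
      have := ih (List.cons_ne_nil b l₁)
      rw [List.cons_append, List.cons_append, breakCount_cons_cons, ← List.cons_append, this,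
        breakCount_cons_cons r a b l₁]
      simp [add_assoc]

lemma breakCount_append_cons_cons (a b : α) (l₁ l₂ : List α) :
    breakCount r (l₁ ++ a :: b :: l₂) =
      breakCount r (l₁ ++ [a]) + breakCount r [a, b] + breakCount r (b :: l₂) := by
  rw [List.append_cons, breakCount_append r (by simp) (by simp)]
  simp

lemma breakCount_append_le (l₁ l₂ : List α) :
    breakCount r (l₁ ++ l₂) ≤ breakCount r l₁ + 1 + breakCount r l₂ := by
  obtain rfl | h₁ := eq_or_ne l₁ []
  · simp
  obtain rfl | h₂ := eq_or_ne l₂ []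
  · simp [add_assoc]
  grind [breakCount_append, breakCount_pair_le_one]

lemma breakCount_reverse [Std.Symm r] (l : List α) :
    breakCount r l.reverse = breakCount r l := by
  induction l with
  | nil => rfl
  | cons a l ih =>
    cases l with
    | nil => rfl
    | cons b l =>
      have hsymm : breakCount r [b, a] = breakCount r [a, b] := by
        simp only [breakCount_pair, comm (r := r)]
      rw [List.reverse_cons, breakCount_append r (by simp) (by simp), ih, breakCount_cons_cons r a]
      simp [hsymm, add_comm]

variable {r} in
lemma breakCount_eq_zero_iff : breakCount r l = 0 ↔ l.IsChain r := by
  induction l using List.twoStepInduction with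
  | nil | singleton => simp [breakCount]
  | cons_cons a b l _ ih => simp [breakCount, ih]

variable {r} in
lemma breakCount_le_of_isChain_imp {r' : α → α → Prop} [DecidableRel r']
    (h : l.IsChain fun a b => r' a b → r a b) : breakCount r l ≤ breakCount r' l := by
  induction h with
  | nil | singleton => rfl
  | @cons_cons a b l hab _ ih =>
    have : breakCount r [a, b] ≤ breakCount r' [a, b] := by
      grind [breakCount_pair]
    grind [breakCount_cons_cons]

-- Each of the `l.length - 1` consecutive pairs contributes at most one to the left-hand side.
lemma breakCount_add_countP_le (p q : α → Prop) [DecidablePred p] [DecidablePred q]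
    (h : l.IsChain fun a b =>
      breakCount r [a, b] + (if p a then 1 else 0) + (if q b then 1 else 0) ≤ 1) :
    breakCount r l + l.dropLast.countP p + l.tail.countP q ≤ l.length - 1 := by
  induction h with
  | nil | singleton => simp [breakCount]
  | @cons_cons a b l hab _ ih =>
    rw [breakCount_cons_cons]
    simp only [List.dropLast_cons_cons, List.tail_cons, List.countP_cons, decide_eq_true_eq,
      List.length_cons] at ih ⊢
    lia

lemma breakCount_flatten_le {L : List (List α)} (h : ∀ l ∈ L, l.IsChain r) :
    breakCount r L.flatten ≤ L.length - 1 := by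
  induction L with
  | nil => rfl
  | cons l L ih =>
    have hl : breakCount r l = 0 := breakCount_eq_zero_iff.2 (h l (by simp))
    have hL := ih fun m hm => h m (by simp [hm])
    cases L with
    | nil => simp [hl]
    | cons m L =>
      have := breakCount_append_le r l (m :: L).flatten
      simp only [List.flatten_cons, List.length_cons] at *
      lia

lemma length_splitBy_eq_breakCount_add_one (hl : l ≠ []) :
    (l.splitBy fun a b => r a b).length = breakCount r l + 1 := by
  induction hn : l.length using Nat.strong_induction_on generalizing l with
  | _ n ih =>
    by_cases hchain : l.IsChain r
    · rw [List.splitBy_of_isChain hl (by simpa using hchain), breakCount_eq_zero_iff.2 hchain]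
      rfl
    · simp only [List.isChain_iff_forall_rel_of_append_cons_cons, not_forall] at hchain
      obtain ⟨a, b, l₁, l₂, rfl, hab⟩ := hchain
      rw [breakCount_append_cons_cons, breakCount_pair, if_neg hab, List.append_cons,
        List.splitBy_append_cons _ (by simpa using hab), List.length_append,
        ih _ (by grind) (by simp) rfl, ih _ (by grind) (by simp) rfl]
      lia

lemma cyclicBreakCount_eq (hl : l ≠ []) :
    cyclicBreakCount r l = breakCount r l + breakCount r [l.getLast hl, l.head hl] := by
  obtain ⟨a, l, rfl⟩ := List.exists_cons_of_ne_nil hl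
  rfl

lemma cyclicBreakCount_append (h₁ : l₁ ≠ []) (h₂ : l₂ ≠ []) :
    cyclicBreakCount r (l₁ ++ l₂) =
      breakCount r l₁ + breakCount r [l₁.getLast h₁, l₂.head h₂] +
        (breakCount r l₂ + breakCount r [l₂.getLast h₂, l₁.head h₁]) := by
  rw [cyclicBreakCount_eq r (by simp [h₁]), breakCount_append r h₁ h₂,
    List.getLast_append_of_right_ne_nil _ _ h₂, List.head_append_of_ne_nil h₁, add_assoc]

lemma cyclicBreakCount_append_comm (l₁ l₂ : List α) :
    cyclicBreakCount r (l₁ ++ l₂) = cyclicBreakCount r (l₂ ++ l₁) := by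
  obtain rfl | h₁ := eq_or_ne l₁ []
  · simp
  obtain rfl | h₂ := eq_or_ne l₂ []
  · simp
  rw [cyclicBreakCount_append r h₁ h₂, cyclicBreakCount_append r h₂ h₁, add_comm]

lemma cyclicBreakCount_reverse_append [Std.Symm r] (h₁ : l₁ ≠ []) (h₂ : l₂ ≠ []) :
    cyclicBreakCount r (l₁.reverse ++ l₂) =
      breakCount r l₁ + breakCount r [l₁.head h₁, l₂.head h₂] +
        (breakCount r l₂ + breakCount r [l₂.getLast h₂, l₁.getLast h₁]) := by
  rw [cyclicBreakCount_append r (by simpa using h₁) h₂, breakCount_reverse, List.getLast_reverse,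
    List.head_reverse]

lemma cyclicBreakCount_le (l : List α) : cyclicBreakCount r l ≤ breakCount r l + 1 := by
  cases l with
  | nil => simp [cyclicBreakCount]
  | cons a l => exact Nat.add_le_add_left (breakCount_pair_le_one r _ _) _

variable {r} in
lemma breakCount_rotate_add_one {a b : α} (hab : ¬ r a b) (l₁ l₂ : List α) :
    breakCount r (b :: l₂ ++ (l₁ ++ [a])) + 1 = cyclicBreakCount r (l₁ ++ a :: b :: l₂) := by
  have hcomm := cyclicBreakCount_append_comm r (b :: l₂) (l₁ ++ [a])
  rw [cyclicBreakCount_eq r (by simp)] at hcomm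
  simpa [breakCount_pair, hab] using hcomm

-- If there is no cyclic break, the bound is `0 - 1 = 0`.
lemma exists_perm_breakCount_le_cyclicBreakCount_sub_one (l : List α) :
    ∃ l', l'.Perm l ∧ breakCount r l' ≤ cyclicBreakCount r l - 1 := by
  by_cases hl : l.IsChain r
  · exact ⟨l, .refl l, by simp [breakCount_eq_zero_iff.2 hl]⟩
  · simp only [List.isChain_iff_forall_rel_of_append_cons_cons, not_forall] at hl
    obtain ⟨a, b, l₁, l₂, rfl, hab⟩ := hl
    refine ⟨b :: l₂ ++ (l₁ ++ [a]), List.perm_append_comm.trans (by simp), ?_⟩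
    exact Nat.le_sub_one_of_lt (breakCount_rotate_add_one hab l₁ l₂).le

variable {r} in
lemma exists_perm_cyclicBreakCount_le_breakCount [Std.Symm r] [Std.Irrefl r] (hl : l ≠ [])
    (hcount : l.length ≤
      breakCount r l + l.countP (r (l.getLast hl)) + l.countP (r (l.head hl))) :
    ∃ l', l'.Perm l ∧ cyclicBreakCount r l' ≤ breakCount r l := by
  set u := l.getLast hl with hu
  set v := l.head hl with hv
  have hcrossing : ¬ l.IsChain fun a b =>
      breakCount r [a, b] + (if r u a then 1 else 0) + (if r v b then 1 else 0) ≤ 1 := by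
    intro h
    have hle := breakCount_add_countP_le r (r u) (r v) h
    have hdropLast : l.dropLast.countP (r u) = l.countP (r u) := by
      conv_rhs => rw [← List.dropLast_append_getLast hl, ← hu]
      simp [List.countP_append, irrefl_of r u]
    have htail : l.tail.countP (r v) = l.countP (r v) := by
      conv_rhs => rw [← List.cons_head_tail hl, ← hv]
      simp [irrefl_of r v]
    have hpos := List.length_pos_of_ne_nil hl
    lia
  simp only [List.isChain_iff_forall_rel_of_append_cons_cons, not_forall] at hcrossing
  obtain ⟨a, b, l₁, l₂, rfl, hab⟩ := hcrossing
  refine ⟨(l₁ ++ [a]).reverse ++ b :: l₂, ?_, ?_⟩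
  · simpa using (List.reverse_perm (l₁ ++ [a])).append_right (b :: l₂)
  · have hswap : breakCount r [v, b] + breakCount r [u, a] ≤ breakCount r [a, b] := by
      grind [breakCount_pair]
    have hhead : (l₁ ++ [a]).head (by simp) = v := by cases l₁ <;> rfl
    have hlast : (b :: l₂).getLast (by simp) = u := by simp [hu]
    rw [cyclicBreakCount_reverse_append r (by simp) (by simp), breakCount_append_cons_cons,
      hhead, hlast, List.head_cons, List.getLast_append_singleton]
    lia

end Breaks

/-- A list containing every element of `α` exactly once; for the vertices of a graph, a linear
arrangement of them. -/
def IsEnumeration {α : Type*} (l : List α) : Prop :=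
  l.Nodup ∧ ∀ x, x ∈ l

namespace IsEnumeration

variable {α : Type*} {l : List α}

lemma perm {l' : List α} (hl : IsEnumeration l) (h : l'.Perm l) : IsEnumeration l' :=
  ⟨h.nodup_iff.2 hl.1, fun x => h.mem_iff.2 (hl.2 x)⟩

lemma length_eq_card [Fintype α] (hl : IsEnumeration l) : l.length = Fintype.card α := by
  classical
  rw [← List.toFinset_card_of_nodup hl.1, ← Finset.card_univ]
  congr 1
  ext x
  simp [hl.2 x]

lemma countP_adj_eq_deg (hl : IsEnumeration l) (G : SimpleGraph α) [DecidableRel G.Adj] (v : α) :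
    l.countP (G.Adj v) = deg G v := by
  classical
  rw [List.countP_eq_length_filter, ← List.toFinset_card_of_nodup (hl.1.filter _), deg,
    ← Set.ncard_coe_finset]
  congr 1
  ext x
  simp [hl.2 x]

end IsEnumeration

section PathCovers

variable {V : Type*} {G H : SimpleGraph V} {k s : ℕ}

lemma SPathCoverable.mono (hle : G ≤ H) (h : SPathCoverable s G) : SPathCoverable s H := by
  obtain ⟨m, hm, a, b, p, hpath, hdisjoint, hcover⟩ := h
  refine ⟨m, hm, a, b, fun i => (p i).mapLe hle, fun i => (hpath i).mapLe hle, ?_, ?_⟩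
  · simpa using hdisjoint
  · simpa using hcover

lemma sPathCoverable_iff_exists_isEnumeration_flatten :
    SPathCoverable s G ↔ ∃ L : List (List V), L.length ≤ s ∧
      (∀ l ∈ L, l ≠ [] ∧ l.IsChain G.Adj) ∧ IsEnumeration L.flatten := by
  constructor
  · rintro ⟨m, hm, a, b, p, hpath, hdisjoint, hcover⟩
    refine ⟨List.ofFn fun i => (p i).support, by simpa using hm, ?_, ?_, fun x => ?_⟩
    · simpa [List.forall_mem_ofFn_iff] using fun i => (p i).isChain_adj_support
    · rw [List.nodup_flatten, List.pairwise_ofFn, List.forall_mem_ofFn_iff]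
      exact ⟨fun i => (hpath i).support_nodup, fun i j hij x => hdisjoint i j hij.ne x⟩
    · simpa [List.mem_flatten, List.mem_ofFn] using hcover x
  · rintro ⟨L, hL, hchain, hnodup, hmem⟩
    rw [List.nodup_flatten] at hnodup
    have hget (i : Fin L.length) := hchain (L.get i) (L.get_mem i)
    refine ⟨L.length, hL, _, _, fun i => .ofSupport (L.get i) (hget i).1 (hget i).2,
      fun i => ?_, fun i j hij => ?_, fun x => ?_⟩
    · rw [SimpleGraph.Walk.isPath_def, SimpleGraph.Walk.support_ofSupport]
      exact hnodup.1 _ (L.get_mem i)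
    · have hdisjoint := List.pairwise_iff_get.1 hnodup.2
      simp only [SimpleGraph.Walk.support_ofSupport]
      intro x hxi hxj
      obtain h | h := lt_or_gt_of_ne hij
      · exact hdisjoint i j h hxi hxj
      · exact hdisjoint j i h hxj hxi
    · obtain ⟨l, hl, hx⟩ := List.mem_flatten.1 (hmem x)
      obtain ⟨i, rfl⟩ := List.mem_iff_get.1 hl
      exact ⟨i, by rwa [SimpleGraph.Walk.support_ofSupport]⟩

lemma sPathCoverable_iff_exists_breakCount_lt [Nonempty V] [DecidableRel G.Adj] :
    SPathCoverable s G ↔ ∃ l, IsEnumeration l ∧ breakCount G.Adj l < s := by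
  rw [sPathCoverable_iff_exists_isEnumeration_flatten]
  constructor
  · rintro ⟨L, hL, hchain, henum⟩
    have hpos : 0 < L.length := by
      obtain ⟨l, hl, -⟩ := List.mem_flatten.1 (henum.2 (Classical.arbitrary V))
      exact List.length_pos_of_mem hl
    have hle := breakCount_flatten_le G.Adj fun l hl => (hchain l hl).2
    exact ⟨L.flatten, henum, by lia⟩
  · rintro ⟨l, henum, hlt⟩
    have hne : l ≠ [] := List.ne_nil_of_mem (henum.2 (Classical.arbitrary V))
    refine ⟨l.splitBy fun a b => G.Adj a b, ?_, fun m hm => ⟨List.ne_nil_of_mem_splitBy hm, ?_⟩, ?_⟩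
    · rwa [length_splitBy_eq_breakCount_add_one G.Adj hne]
    · simpa using List.isChain_of_mem_splitBy hm
    · rwa [List.flatten_splitBy]

lemma breakCount_le_breakCount_sup_edge [DecidableRel G.Adj] [DecidableRel H.Adj]
    {u v : V} (hH : H ≤ G ⊔ SimpleGraph.edge u v) {l : List V} (hl : u ∉ l ∨ v ∉ l) :
    breakCount G.Adj l ≤ breakCount H.Adj l := by
  apply breakCount_le_of_isChain_imp
  rw [List.isChain_iff_forall_rel_of_append_cons_cons]
  rintro a b l₁ l₂ rfl hab
  have hab' := hH hab
  rw [SimpleGraph.sup_adj, SimpleGraph.edge_adj] at hab'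
  grind

-- A duplicate-free list passes through the edge `s(u, v)` at most once.
lemma breakCount_le_or_exists_eq_append [DecidableRel G.Adj] [DecidableRel H.Adj]
    {u v : V} (hH : H ≤ G ⊔ SimpleGraph.edge u v) {l : List V} (hl : l.Nodup) :
    breakCount G.Adj l ≤ breakCount H.Adj l ∨
      ∃ a b l₁ l₂, l = l₁ ++ a :: b :: l₂ ∧ s(a, b) = s(u, v) ∧
        breakCount G.Adj l ≤ breakCount H.Adj l + 1 := by
  rw [or_iff_not_imp_left]
  intro hlt
  have hedge := mt breakCount_le_of_isChain_imp hlt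
  simp only [List.isChain_iff_forall_rel_of_append_cons_cons, not_forall] at hedge
  obtain ⟨a, b, l₁, l₂, rfl, hHab⟩ := hedge
  have hab : s(a, b) = s(u, v) := by
    have hsup := @hH a b
    grind
  refine ⟨a, b, l₁, l₂, rfl, hab, ?_⟩
  have hleft : u ∉ l₁ ++ [a] ∨ v ∉ l₁ ++ [a] := by grind
  have hright : u ∉ b :: l₂ ∨ v ∉ b :: l₂ := by grind
  have hle₁ := breakCount_le_breakCount_sup_edge hH hleft
  have hle₂ := breakCount_le_breakCount_sup_edge hH hright
  have hone := breakCount_pair_le_one G.Adj a b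
  rw [breakCount_append_cons_cons, breakCount_append_cons_cons]
  lia

lemma IsEnumeration.exists_breakCount_lt_of_not_adj [Fintype V] [DecidableRel G.Adj] {a b : V}
    {l₁ l₂ : List V} (henum : IsEnumeration (l₁ ++ a :: b :: l₂)) (hab : ¬ G.Adj a b) (hs : 0 < s)
    (hbreaks : breakCount G.Adj (l₁ ++ a :: b :: l₂) ≤ s)
    (hdeg : Fintype.card V ≤ deg G a + deg G b + s) :
    ∃ l, IsEnumeration l ∧ breakCount G.Adj l < s := by
  set l := b :: l₂ ++ (l₁ ++ [a]) with hl
  have hlenum : IsEnumeration l := henum.perm (List.perm_append_comm.trans (by simp))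
  have hrotate := breakCount_rotate_add_one hab l₁ l₂
  have hcyclic := cyclicBreakCount_le G.Adj (l₁ ++ a :: b :: l₂)
  by_cases hlt : breakCount G.Adj l < s
  · exact ⟨l, hlenum, hlt⟩
  have := G.symm
  have := G.loopless
  have hhead : l.head (by simp [hl]) = b := rfl
  have hlast : l.getLast (by simp [hl]) = a := by simp [hl]
  obtain ⟨m, hm, hmbreaks⟩ := exists_perm_cyclicBreakCount_le_breakCount
    (r := G.Adj) (l := l) (by simp [hl]) (by
      rw [hhead, hlast, hlenum.countP_adj_eq_deg, hlenum.countP_adj_eq_deg, hlenum.length_eq_card]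
      lia)
  obtain ⟨m', hm', hmbreaks'⟩ := exists_perm_breakCount_le_cyclicBreakCount_sub_one G.Adj m
  exact ⟨m', (hlenum.perm hm).perm hm', by lia⟩

lemma ClosureStep.le (h : ClosureStep k G H) : G ≤ H := by
  obtain ⟨u, v, -, -, -, rfl⟩ := h
  exact le_sup_left

lemma ClosureStep.sPathCoverable_iff [Fintype V] (hk : Fintype.card V ≤ k + s)
    (h : ClosureStep k G H) : SPathCoverable s G ↔ SPathCoverable s H := by
  classical
  refine ⟨.mono h.le, fun hcover => ?_⟩
  obtain ⟨u, v, -, hnadj, hdeg, hH⟩ := h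
  have : Nonempty V := ⟨u⟩
  rw [sPathCoverable_iff_exists_breakCount_lt] at hcover ⊢
  obtain ⟨l, henum, hlt⟩ := hcover
  obtain hle | ⟨a, b, l₁, l₂, rfl, hab, hle⟩ :=
    breakCount_le_or_exists_eq_append hH.le henum.1
  · exact ⟨l, henum, hle.trans_lt hlt⟩
  · have hnadj' : ¬ G.Adj a b := by rwa [G.adj_congr_of_sym2 hab]
    have hdeg' : k ≤ deg G a + deg G b := by grind
    exact henum.exists_breakCount_lt_of_not_adj hnadj' (by lia) (hle.trans hlt) (by lia)

end PathCovers

theorem stmt_5_general {V : Type*} [Fintype V] {k s : ℕ} {G H : SimpleGraph V}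
    (hk : Fintype.card V ≤ k + s) (h : Relation.ReflTransGen (ClosureStep k) G H) :
    SPathCoverable s G ↔ SPathCoverable s H := by
  induction h with
  | refl => exact Iff.rfl
  | tail _ hstep ih => exact ih.trans (hstep.sPathCoverable_iff hk)

/-- `G` is `s`-path-coverable iff its `(n-s)`-closure is `s`-path-coverable. -/
theorem stmt_5 {V : Type*} [Fintype V] (n s : ℕ) (G H : SimpleGraph V)
    (hcard : Fintype.card V = n) (hH : IsKClosure (n - s) G H) :
    SPathCoverable s G ↔ SPathCoverable s H := by
  exact stmt_5_general (by lia) hH.1
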